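/- Let C be a bounded cochain complex of finite-dimensional real vector spaces indexed by the natural numbers, vanishing in degrees ≥ N, and let f : C → C be a chain map such that each f^i is a linear automorphism of C^i. Let H^i(f) denote the induced linear automorphism of the i-th cohomology H^i(C) = ker(d^i)/im(d^{i-1}). Then the alternating product of the determinants of f equals the alternating product of the determinants of the induced maps on cohomology: ∏_{i<N} det(f^i)^{(-1)^i} = ∏_{i<N} det(H^i(f))^{(-1)^i}; equivalently, ∏_{even i<N} det(f^i) · ∏_{odd i<N} det(H^i(f)) = ∏_{odd i<N} det(f^i) · ∏_{even i<N} det(H^i(f)). -/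

import Mathlib

/-- A cochain complex of real vector spaces indexed by the natural numbers. -/
structure CochainComplexNat where
  X : ℕ → Type
  [addCommGroup : ∀ i, AddCommGroup (X i)]
  [module : ∀ i, Module ℝ (X i)]
  d : ∀ i, X i →ₗ[ℝ] X (i + 1)
  d_comp_d : ∀ i, (d (i + 1)).comp (d i) = 0

attribute [instance] CochainComplexNat.addCommGroup CochainComplexNat.module

/-- A chain map between ℕ-indexed cochain complexes: a family of linear maps
commuting with the differentials. -/
structure ChainMap (C₁ C₂ : CochainComplexNat) where
  f : ∀ i, C₁.X i →ₗ[ℝ] C₂.X i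
  comm : ∀ i, (C₂.d i).comp (f i) = (f (i + 1)).comp (C₁.d i)

/-- The identity chain map. -/
def ChainMap.id (C : CochainComplexNat) : ChainMap C C where
  f _ := LinearMap.id
  comm _ := by simp

/-- Composition of chain maps. -/
def ChainMap.comp {C₁ C₂ C₃ : CochainComplexNat} (G : ChainMap C₂ C₃) (F : ChainMap C₁ C₂) :
    ChainMap C₁ C₃ where
  f i := (G.f i).comp (F.f i)
  comm i := by
    ext v
    have h₁ := LinearMap.congr_fun (F.comm i) v
    have h₂ := LinearMap.congr_fun (G.comm i) (F.f i v)
    simp only [LinearMap.comp_apply] at h₁ h₂ ⊢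
    rw [h₂, h₁]

/-- `Homotopic F G` : there exists a chain homotopy `Φ` from `F` to `G`, i.e. a family of
linear maps one degree down (with `Φ^0 = 0`, implemented by letting `Φ i : C₁^{i+1} → C₂^i`
play the role of `Φ^{i+1}`) with `G - F = d ∘ Φ + Φ ∘ d` in every degree. -/
def Homotopic {C₁ C₂ : CochainComplexNat} (F G : ChainMap C₁ C₂) : Prop :=
  ∃ Φ : ∀ i, C₁.X (i + 1) →ₗ[ℝ] C₂.X i,
    (G.f 0 - F.f 0 = (Φ 0).comp (C₁.d 0)) ∧
    ∀ i, G.f (i + 1) - F.f (i + 1) = (C₂.d i).comp (Φ i) + (Φ (i + 1)).comp (C₁.d (i + 1))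

/-- A chain map is a homotopy equivalence if it has a chain-homotopy inverse. -/
def IsHomotopyEquiv {C₁ C₂ : CochainComplexNat} (F : ChainMap C₁ C₂) : Prop :=
  ∃ G : ChainMap C₂ C₁,
    Homotopic (G.comp F) (ChainMap.id C₁) ∧ Homotopic (F.comp G) (ChainMap.id C₂)

/-- The cocycles `Z^i = ker d^i`. -/
def cocycles (C : CochainComplexNat) (i : ℕ) : Submodule ℝ (C.X i) :=
  LinearMap.ker (C.d i)

/-- The coboundaries `B^i = im d^{i-1}`, with `B^0 = 0` (i.e. `d^{-1} = 0`). -/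
def coboundaries (C : CochainComplexNat) : (i : ℕ) → Submodule ℝ (C.X i)
  | 0 => ⊥
  | (i + 1) => LinearMap.range (C.d i)

/-- The `i`-th cohomology `H^i(C) = ker d^i / im d^{i-1}`. -/
abbrev cohomology (C : CochainComplexNat) (i : ℕ) : Type :=
  cocycles C i ⧸ (coboundaries C i).comap (cocycles C i).subtype

/-- A chain map `F : C → C` preserves cocycles. -/
theorem chainMap_mem_cocycles {C : CochainComplexNat} (F : ChainMap C C) (i : ℕ) :
    ∀ v ∈ cocycles C i, F.f i v ∈ cocycles C i := by
  intro v hv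
  have hc := LinearMap.congr_fun (F.comm i) v
  simp only [LinearMap.comp_apply] at hc
  simp only [cocycles, LinearMap.mem_ker] at hv ⊢
  rw [hc, hv, map_zero]

/-- The linear map induced on `i`-th cohomology by a chain map `F : C → C`. -/
def ChainMap.cohomologyMap {C : CochainComplexNat} (F : ChainMap C C) (i : ℕ) :
    cohomology C i →ₗ[ℝ] cohomology C i :=
  Submodule.mapQ _ _ ((F.f i).restrict (chainMap_mem_cocycles F i))
    (by
      intro v hv
      simp only [Submodule.mem_comap, Submodule.subtype_apply, LinearMap.restrict_apply] at hv ⊢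
      match i, v, hv with
      | 0, v, hv =>
        simp only [coboundaries, Submodule.mem_bot] at hv ⊢
        rw [hv, map_zero]
      | (i + 1), v, hv =>
        simp only [coboundaries, LinearMap.mem_range] at hv ⊢
        obtain ⟨w, hw⟩ := hv
        refine ⟨F.f i w, ?_⟩
        have hc := LinearMap.congr_fun (F.comm i) w
        simp only [LinearMap.comp_apply] at hc
        rw [hc, hw])

/-!
Restricting `F` to `B^i ⊆ Z^i ⊆ C^i` and using `C^i / Z^i ≃ B^(i+1)` gives
`det F^i = det (F | B^i) * det H^i(F) * det (F | B^(i+1))`. In the alternating product each factor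
`det (F | B^i)` with `0 < i < N` occurs once in an even and once in an odd degree, while
`B^0 = B^N = 0`. Even and odd degrees are collected on opposite sides, which avoids dividing by
determinants that may vanish.
-/

section Semiconjugation

variable {R V W : Type*} [Semiring R] [AddCommMonoid V] [Module R V] [AddCommMonoid W] [Module R W]
  {d : V →ₗ[R] W} {f : V →ₗ[R] V} {g : W →ₗ[R] W}

theorem map_mem_ker_of_comp_eq (h : d ∘ₗ f = g ∘ₗ d) :
    ∀ v ∈ LinearMap.ker d, f v ∈ LinearMap.ker d := fun v hv => by
  rw [LinearMap.mem_ker, ← LinearMap.comp_apply, h, LinearMap.comp_apply, hv, map_zero]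

theorem map_mem_range_of_comp_eq (h : d ∘ₗ f = g ∘ₗ d) :
    ∀ w ∈ LinearMap.range d, g w ∈ LinearMap.range d := by
  rintro _ ⟨v, rfl⟩
  exact ⟨f v, LinearMap.congr_fun h v⟩

end Semiconjugation

section Determinants

theorem det_eq_det_of_semiconj {R V W : Type*} [CommRing R] [AddCommGroup V] [Module R V]
    [AddCommGroup W] [Module R W] {f : V →ₗ[R] V} {g : W →ₗ[R] W} (e : V ≃ₗ[R] W)
    (h : Function.Semiconj e f g) : LinearMap.det f = LinearMap.det g := by
  rw [← LinearMap.det_conj f e]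
  congr 1
  ext w
  simpa using h (e.symm w)

variable {K V W : Type*} [Field K] [AddCommGroup V] [Module K V] [AddCommGroup W] [Module K W]

theorem det_ne_zero_of_injective [FiniteDimensional K V] {f : V →ₗ[K] V}
    (hf : Function.Injective f) : LinearMap.det f ≠ 0 := by
  simpa [LinearMap.det_eq_zero_iff_ker_ne_bot] using LinearMap.ker_eq_bot.mpr hf

theorem det_restrict_eq_det_restrict_mul_det_mapQ {B Z : Submodule K V} [FiniteDimensional K Z]
    (hBZ : B ≤ Z) (f : V →ₗ[K] V) (hB : ∀ v ∈ B, f v ∈ B) (hZ : ∀ v ∈ Z, f v ∈ Z) :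
    LinearMap.det (f.restrict hZ) = LinearMap.det (f.restrict hB) *
      LinearMap.det (Submodule.mapQ (B.comap Z.subtype) (B.comap Z.subtype) (f.restrict hZ)
        fun v hv => hB v hv) := by
  rw [LinearMap.det_eq_det_mul_det (B.comap Z.subtype) (f.restrict hZ) fun v hv => hB v hv]
  congr 1
  exact det_eq_det_of_semiconj (Submodule.comapSubtypeEquivOfLe hBZ) fun _ => rfl

theorem det_eq_det_restrict_ker_mul_det_restrict_range [FiniteDimensional K V] {d : V →ₗ[K] W}
    {f : V →ₗ[K] V} {g : W →ₗ[K] W} (h : d ∘ₗ f = g ∘ₗ d) :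
    LinearMap.det f = LinearMap.det (f.restrict (map_mem_ker_of_comp_eq h)) *
      LinearMap.det (g.restrict (map_mem_range_of_comp_eq h)) := by
  rw [LinearMap.det_eq_det_mul_det (LinearMap.ker d) f (map_mem_ker_of_comp_eq h)]
  congr 1
  refine det_eq_det_of_semiconj d.quotKerEquivRange fun v => ?_
  induction v using Submodule.Quotient.induction_on with
  | H v => exact Subtype.ext (LinearMap.congr_fun h v)

end Determinants

section AlternatingProducts

open Finset

theorem prod_zpow_neg_one_pow_eq_div {M : Type*} [DivisionCommMonoid M] (a : ℕ → M)
    (s : Finset ℕ) :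
    ∏ i ∈ s, a i ^ ((-1 : ℤ) ^ i) =
      (∏ i ∈ s with Even i, a i) / ∏ i ∈ s with ¬ Even i, a i := by
  rw [← prod_filter_mul_prod_filter_not s Even, div_eq_mul_inv, ← prod_inv_distrib]
  congr 1 <;> refine prod_congr rfl fun i hi => ?_
  · rw [(mem_filter.mp hi).2.neg_one_pow, zpow_one]
  · rw [(Nat.not_even_iff_odd.mp (mem_filter.mp hi).2).neg_one_pow, zpow_neg_one]

variable {M : Type*} [CommMonoid M] {a b h : ℕ → M}

theorem prod_even_mul_prod_odd_telescope (hab : ∀ i, a i = b i * h i * b (i + 1)) (n : ℕ) :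
    (∏ i ∈ range n with Even i, a i) * (∏ i ∈ range n with ¬ Even i, h i) *
        (if Even n then b n else 1) =
      b 0 * (∏ i ∈ range n with ¬ Even i, a i) * (∏ i ∈ range n with Even i, h i) *
        (if Even n then 1 else b n) := by
  induction n with
  | zero => simp
  | succ n ih =>
    have hmul := congrArg (· * (h n * b (n + 1))) ih
    by_cases hn : Even n <;>
    · simp only [hn, range_add_one, filter_insert, prod_insert, mem_filter, mem_range, lt_irrefl,
        false_and, Nat.even_add_one, not_true, not_false_iff, if_true, if_false, mul_one,
        hab n] at hmul ⊢
      convert hmul using 1 <;> ac_rfl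

theorem prod_even_mul_prod_odd_eq_of_telescope (hab : ∀ i, a i = b i * h i * b (i + 1)) {n : ℕ}
    (hb₀ : b 0 = 1) (hbn : b n = 1) :
    (∏ i ∈ range n with Even i, a i) * (∏ i ∈ range n with ¬ Even i, h i) =
      (∏ i ∈ range n with ¬ Even i, a i) * ∏ i ∈ range n with Even i, h i := by
  simpa only [hb₀, hbn, ite_self, one_mul, mul_one] using prod_even_mul_prod_odd_telescope hab n

end AlternatingProducts

theorem coboundaries_le_cocycles (C : CochainComplexNat) (i : ℕ) :
    coboundaries C i ≤ cocycles C i := by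
  cases i with
  | zero => exact bot_le
  | succ i => exact LinearMap.range_le_ker_iff.mpr (C.d_comp_d i)

namespace ChainMap

variable {C : CochainComplexNat} (F : ChainMap C C)

theorem map_mem_coboundaries (i : ℕ) : ∀ v ∈ coboundaries C i, F.f i v ∈ coboundaries C i := by
  cases i with
  | zero => simp [coboundaries]
  | succ i => exact map_mem_range_of_comp_eq (F.comm i)

/-- The endomorphism of the coboundaries `B^i` induced by a chain map `F : C → C`, the counterpart
of `ChainMap.cohomologyMap`. -/
def coboundariesMap (i : ℕ) : coboundaries C i →ₗ[ℝ] coboundaries C i :=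
  (F.f i).restrict (F.map_mem_coboundaries i)

theorem det_coboundariesMap_of_eq_bot {i : ℕ} (hi : coboundaries C i = ⊥) :
    LinearMap.det (F.coboundariesMap i) = 1 :=
  have : Subsingleton (coboundaries C i) := Submodule.subsingleton_iff_eq_bot.mpr hi
  LinearMap.det_eq_one_of_subsingleton _

variable [∀ i, FiniteDimensional ℝ (C.X i)]

theorem det_restrict_cocycles (i : ℕ) :
    LinearMap.det ((F.f i).restrict (chainMap_mem_cocycles F i)) =
      LinearMap.det (F.coboundariesMap i) * LinearMap.det (F.cohomologyMap i) :=
  det_restrict_eq_det_restrict_mul_det_mapQ (coboundaries_le_cocycles C i) (F.f i)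
    (F.map_mem_coboundaries i) (chainMap_mem_cocycles F i)

theorem det_eq_det_coboundariesMap_mul_det_cohomologyMap_mul (i : ℕ) :
    LinearMap.det (F.f i) =
      LinearMap.det (F.coboundariesMap i) * LinearMap.det (F.cohomologyMap i) *
        LinearMap.det (F.coboundariesMap (i + 1)) := by
  rw [← F.det_restrict_cocycles i]
  exact det_eq_det_restrict_ker_mul_det_restrict_range (F.comm i)

theorem det_cohomologyMap_ne_zero {i : ℕ} (hF : Function.Injective (F.f i)) :
    LinearMap.det (F.cohomologyMap i) ≠ 0 := by
  have hdet := det_ne_zero_of_injective hF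
  rw [F.det_eq_det_coboundariesMap_mul_det_cohomologyMap_mul] at hdet
  exact right_ne_zero_of_mul (left_ne_zero_of_mul hdet)

end ChainMap

theorem alternating_det_eq_alternating_det_cohomology_general
    (C : CochainComplexNat) [∀ i, FiniteDimensional ℝ (C.X i)]
    (N : ℕ) (hN : coboundaries C N = ⊥) (F : ChainMap C C) :
    ((∀ i < N, Function.Bijective (F.f i)) →
      ∏ i ∈ Finset.range N, LinearMap.det (F.f i) ^ ((-1 : ℤ) ^ i) =
        ∏ i ∈ Finset.range N, LinearMap.det (F.cohomologyMap i) ^ ((-1 : ℤ) ^ i)) ∧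
    ((∏ i ∈ (Finset.range N).filter (fun i => Even i), LinearMap.det (F.f i)) *
        (∏ i ∈ (Finset.range N).filter (fun i => ¬ Even i),
          LinearMap.det (F.cohomologyMap i)) =
      (∏ i ∈ (Finset.range N).filter (fun i => ¬ Even i), LinearMap.det (F.f i)) *
        (∏ i ∈ (Finset.range N).filter (fun i => Even i),
          LinearMap.det (F.cohomologyMap i))) := by
  have key := prod_even_mul_prod_odd_eq_of_telescope
    F.det_eq_det_coboundariesMap_mul_det_cohomologyMap_mul
    (F.det_coboundariesMap_of_eq_bot rfl) (F.det_coboundariesMap_of_eq_bot hN)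
  refine ⟨fun hF => ?_, key⟩
  have hinj {i : ℕ} {p : ℕ → Prop} [DecidablePred p] (hi : i ∈ (Finset.range N).filter p) :
      Function.Injective (F.f i) :=
    (hF i (Finset.mem_range.mp (Finset.mem_filter.mp hi).1)).injective
  rw [prod_zpow_neg_one_pow_eq_div, prod_zpow_neg_one_pow_eq_div,
    div_eq_div_iff (Finset.prod_ne_zero_iff.mpr fun i hi => det_ne_zero_of_injective (hinj hi))
      (Finset.prod_ne_zero_iff.mpr fun i hi => F.det_cohomologyMap_ne_zero (hinj hi)),
    key, mul_comm]

/-- If `C` is a bounded cochain complex of finite-dimensional real vector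
spaces vanishing in degrees `≥ N`, and `F : C → C` is a chain map with each `F^i` a linear
automorphism, then the alternating product of the determinants of `F` equals the alternating
product of the determinants of the induced maps on cohomology. -/
theorem alternating_det_eq_alternating_det_cohomology
    (C : CochainComplexNat) [∀ i, FiniteDimensional ℝ (C.X i)]
    (N : ℕ) (hbd : ∀ i, N ≤ i → ∀ v : C.X i, v = 0)
    (F : ChainMap C C) (hbij : ∀ i, Function.Bijective (F.f i)) :
    (∏ i ∈ Finset.range N, LinearMap.det (F.f i) ^ ((-1 : ℤ) ^ i) =
      ∏ i ∈ Finset.range N, LinearMap.det (F.cohomologyMap i) ^ ((-1 : ℤ) ^ i)) ∧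
    ((∏ i ∈ (Finset.range N).filter (fun i => Even i), LinearMap.det (F.f i)) *
        (∏ i ∈ (Finset.range N).filter (fun i => ¬ Even i),
          LinearMap.det (F.cohomologyMap i)) =
      (∏ i ∈ (Finset.range N).filter (fun i => ¬ Even i), LinearMap.det (F.f i)) *
        (∏ i ∈ (Finset.range N).filter (fun i => Even i),
          LinearMap.det (F.cohomologyMap i))) := by
  have hN : coboundaries C N = ⊥ := (Submodule.eq_bot_iff _).mpr fun v _ => hbd N le_rfl v
  exact (alternating_det_eq_alternating_det_cohomology_general C N hN F).imp_left
    fun h => h fun i _ => hbij i
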